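/- Let B be a fragment of a fullerene graph F and W the set of degree-2 vertices of B on its boundary. If |W| = 3, then T = F − (V(B) \ W) is a star K_{1,3} with the three vertices of W as leaves. -/

import Mathlib

/-!
The edges leaving `V(B)` start at the three vertices of `W`, one at each, except for those joining
two vertices of `W`. By parity and 3-edge-connectivity, exactly three edges leave `V(B)`. So
everything follows once it is known that a fullerene has no nontrivial 3-edge cut, one with at least
two vertices on both sides (`CubicMap.no_cut`): the complement of `V(B)` is then a single vertex `c`
adjacent to all of `W`, and `W` is independent because a triangle would be one side of such a
cut (`CubicMap.no_triangle`).

Let `X` be a side of a nontrivial 3-edge cut. Three faces cross it. Let the border be the set of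
vertices of `X` on these faces. Counting incidences between vertices and faces,
* the crossing faces have at least `#border + 3` incidences with `X`;
* at most `#border - 3` edges lead from the border into the rest of `X`.

Hence the crossing faces have at least 9 incidences with `X` (`CubicMap.nine_le_crossInc`). The same
holds on the other side, and three faces have at most 18 vertices, so all crossing faces are hexagons
and both counts are 9 (`CubicMap.crossInc_eq_nine`). Consequently, either the border is all of `X`,
which then has room for at most one face, or the rest of `X` is again a side of a nontrivial 3-edge cut and
contains all pentagons of `X`. By induction each side contains at most one pentagon
(`CubicMap.pent_le_one`), whereas there are twelve.
-/

open SimpleGraph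

/-- A graph is factor-critical if deleting any vertex leaves a graph with a perfect matching. -/
def FactorCritical {V : Type} (G : SimpleGraph V) : Prop :=
  ∀ v : V, ∃ M : G.Subgraph, M.IsMatching ∧ M.verts = {v}ᶜ

/-- The set of edges of `G` with exactly one endpoint in `X` (the edge cut `∇(X)`). -/
def edgeCut {V : Type} (G : SimpleGraph V) (X : Set V) : Set (Sym2 V) :=
  {e | ∃ a b, G.Adj a b ∧ e = s(a,b) ∧ a ∈ X ∧ b ∉ X}

/-- The set of edges of `G` with one endpoint in `X` and the other in `Y`. -/
def edgesBetween {V : Type} (G : SimpleGraph V) (X Y : Set V) : Set (Sym2 V) :=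
  {e | ∃ a b, G.Adj a b ∧ e = s(a,b) ∧ a ∈ X ∧ b ∈ Y}

/-- The set of edges of `G` with both endpoints in `X`. -/
def interiorEdges {V : Type} (G : SimpleGraph V) (X : Set V) : Set (Sym2 V) :=
  {e | e ∈ G.edgeSet ∧ ∀ v ∈ e, v ∈ X}

/-- `C` is a cyclic edge-cut of `G`: after deleting `C` there are cycles in two
different components. -/
def IsCyclicEdgeCut {V : Type} (G : SimpleGraph V) (C : Set (Sym2 V)) : Prop :=
  C ⊆ G.edgeSet ∧ ∃ (u v : V) (p : (G.deleteEdges C).Walk u u) (q : (G.deleteEdges C).Walk v v),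
    p.IsCycle ∧ q.IsCycle ∧ ¬ (G.deleteEdges C).Reachable u v

/-- `G` is cyclically `k`-edge-connected: every cyclic edge-cut has at least `k` edges. -/
def CyclicallyEdgeConnected {V : Type} (G : SimpleGraph V) (k : ℕ) : Prop :=
  ∀ C : Set (Sym2 V), IsCyclicEdgeCut G C → k ≤ C.ncard

/-- A graph is 2-connected if it has at least 3 vertices and deleting any vertex
leaves it connected. -/
def TwoConnected {W : Type} (G : SimpleGraph W) : Prop :=
  3 ≤ Nat.card W ∧ ∀ v : W, ((⊤ : G.Subgraph).deleteVerts {v}).coe.Connected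

/-- A combinatorial plane structure on a graph: an abstract set of faces, each face
being a cycle of the graph, with every edge lying on exactly two faces. -/
structure PlaneFaceStruct (V : Type) (G : SimpleGraph V) where
  Face : Type
  faceFinite : Finite Face
  boundary : Face → Set (Sym2 V)
  boundary_sub : ∀ f, boundary f ⊆ G.edgeSet
  boundary_cycle : ∀ f : Face, ∃ (v : V) (w : G.Walk v v), w.IsCycle ∧
    ∀ e, e ∈ boundary f ↔ e ∈ w.edges
  edge_faces : ∀ e ∈ G.edgeSet, {f : Face | e ∈ boundary f}.ncard = 2

/-- A fullerene graph: a 3-connected cubic plane graph whose faces are pentagons and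
hexagons, with exactly 12 pentagonal faces. -/
structure Fullerene (V : Type) [Fintype V] where
  G : SimpleGraph V
  threeConnected : ∀ S : Set V, S.ncard ≤ 2 → ((⊤ : G.Subgraph).deleteVerts S).coe.Connected
  cubic : ∀ v : V, Nat.card {w // G.Adj v w} = 3
  faces : PlaneFaceStruct V G
  face_size : ∀ f, (faces.boundary f).ncard = 5 ∨ (faces.boundary f).ncard = 6
  pentagons : {f : faces.Face | (faces.boundary f).ncard = 5}.ncard = 12

/-- The vertices on the boundary of a face. -/
def Fullerene.faceVerts {V : Type} [Fintype V] (Fu : Fullerene V) (f : Fu.faces.Face) : Set V :=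
  {v | ∃ e ∈ Fu.faces.boundary f, v ∈ e}

/-- `g` is a neighboring face of `f`: it is distinct from `f` and shares an edge with it. -/
def Fullerene.NeighboringFace {V : Type} [Fintype V] (Fu : Fullerene V)
    (g f : Fu.faces.Face) : Prop :=
  g ≠ f ∧ (Fu.faces.boundary g ∩ Fu.faces.boundary f).Nonempty

/-- `B` is a fragment of the fullerene: a union of faces whose outer boundary (the
edges of `B` also lying on a face outside the fragment) is a single cycle — i.e. a
cycle of `F` together with its interior. -/
def Fullerene.IsFragment {V : Type} [Fintype V] (Fu : Fullerene V) (B : Fu.G.Subgraph) : Prop :=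
  ∃ S : Set Fu.faces.Face,
    B.edgeSet = ⋃ f ∈ S, Fu.faces.boundary f ∧
    B.verts = {v | ∃ e ∈ B.edgeSet, v ∈ e} ∧
    ∃ (u : V) (p : Fu.G.Walk u u), p.IsCycle ∧
      {e | e ∈ B.edgeSet ∧ ∃ f, f ∉ S ∧ e ∈ Fu.faces.boundary f} = {e | e ∈ p.edges}

/-- The set `W` of vertices of degree 2 in the fragment `B`. -/
def Fullerene.fragW {V : Type} [Fintype V] (Fu : Fullerene V) (B : Fu.G.Subgraph) : Set V :=
  {v | v ∈ B.verts ∧ Nat.card {w // B.Adj v w} = 2}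

/-- The vertex set of `T = F - (V(B) \ W)`. -/
def Fullerene.fragTverts {V : Type} [Fintype V] (Fu : Fullerene V) (B : Fu.G.Subgraph) : Set V :=
  {v | v ∉ B.verts \ Fu.fragW B}

open Finset
open scoped Classical

/-! ### Counting related pairs between two vertex sets -/

section Counting

variable {V : Type}

/-- The number of pairs `(x, y)` with `x ∈ X`, `y ∈ Y` and `r x y`. For a symmetric `r`, each
unordered pair inside `X` is counted twice in `cnt r X X`. -/
noncomputable def cnt (r : V → V → Prop) (X Y : Finset V) : ℕ :=
  ∑ x ∈ X, #{y ∈ Y | r x y}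

theorem cnt_union (r : V → V → Prop) (X : Finset V) {Y Z : Finset V} (h : Disjoint Y Z) :
    cnt r X (Y ∪ Z) = cnt r X Y + cnt r X Z := by
  unfold cnt
  rw [← sum_add_distrib]
  refine sum_congr rfl fun x _ => ?_
  rw [filter_union, card_union_of_disjoint (disjoint_filter_filter h)]

theorem cnt_comm (r : V → V → Prop) (hs : ∀ u v, r u v → r v u) (X Y : Finset V) :
    cnt r X Y = cnt r Y X := by
  unfold cnt
  have := sum_card_bipartiteAbove_eq_sum_card_bipartiteBelow (s := X) (t := Y) r
  unfold bipartiteAbove bipartiteBelow at this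
  rw [this]
  refine sum_congr rfl fun x _ => ?_
  congr 1
  ext y
  simp only [mem_filter, and_congr_right_iff]
  exact fun _ => ⟨hs _ _, hs _ _⟩

theorem cnt_union_left (r : V → V → Prop) (hs : ∀ u v, r u v → r v u) (X : Finset V)
    {Y Z : Finset V} (h : Disjoint Y Z) :
    cnt r (Y ∪ Z) X = cnt r Y X + cnt r Z X := by
  rw [cnt_comm r hs, cnt_union r X h, cnt_comm r hs X, cnt_comm r hs X]

/-- The handshake lemma for the subgraph induced on `X`. -/
theorem cnt_self_even (r : V → V → Prop) (hs : ∀ u v, r u v → r v u) (hi : ∀ u, ¬ r u u)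
    (X : Finset V) : Even (cnt r X X) := by
  induction X using Finset.induction_on with
  | empty => simp [cnt]
  | insert a s ha ih =>
    have hd : Disjoint ({a} : Finset V) s := by simpa using ha
    rw [insert_eq, cnt_union_left r hs _ hd, cnt_union _ _ hd, cnt_union _ _ hd,
      cnt_comm r hs s {a}]
    have : cnt r {a} {a} = 0 := by simp [cnt, hi]
    obtain ⟨k, hk⟩ := ih
    exact ⟨cnt r {a} s + k, by omega⟩

theorem cnt_eq_sum (r : V → V → Prop) (X Y : Finset V) :
    cnt r X Y = ∑ x ∈ X, cnt r {x} Y := by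
  simp [cnt]

theorem cnt_pos (r : V → V → Prop) (X Y : Finset V) {x y : V} (hx : x ∈ X) (hy : y ∈ Y)
    (h : r x y) : 0 < cnt r X Y := by
  unfold cnt
  refine sum_pos' (fun _ _ => Nat.zero_le _) ⟨x, hx, card_pos.2 ⟨y, by simp [hy, h]⟩⟩

theorem exists_of_cnt_pos (r : V → V → Prop) (X Y : Finset V) (h : 0 < cnt r X Y) :
    ∃ x ∈ X, ∃ y ∈ Y, r x y := by
  unfold cnt at h
  obtain ⟨x, hx, h⟩ := (sum_pos_iff).1 h
  obtain ⟨y, hy⟩ := card_pos.1 h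
  simp only [mem_filter] at hy
  exact ⟨x, hx, y, hy⟩

theorem cnt_univ [Fintype V] (r : V → V → Prop) (X Y : Finset V) :
    cnt r Y univ = cnt r Y X + cnt r Y Xᶜ := by
  rw [← cnt_union r Y disjoint_compl_right, union_compl]

end Counting

/-! ### Three-edge cuts in cubic pentagon-hexagon maps -/

/-- The incidence data of a fullerene in relational form: `A` is adjacency, `R f u v` says that
`uv` is an edge of the face `f`, and `C f` is the vertex set of `f`. As a face is a cycle, its size
is `#(C f)`, every vertex of `C f` has two `R f`-neighbours, and `C f` is connected through
`R f`. Connectivity enters only as 3-edge-connectivity. Planarity is not a field; what is used of it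
is encoded in the number 12 of pentagons. -/
structure CubicMap (V F : Type) [Fintype V] [Fintype F] where
  A : V → V → Prop
  R : F → V → V → Prop
  A_symm : ∀ u v, A u v → A v u
  A_irrefl : ∀ u, ¬ A u u
  R_symm : ∀ f u v, R f u v → R f v u
  R_sub : ∀ f u v, R f u v → A u v
  C : F → Finset V
  mem_C : ∀ f v, v ∈ C f ↔ ∃ w, R f v w
  degree : ∀ v, cnt A {v} Finset.univ = 3
  two_faces : ∀ u v, A u v → {f | R f u v}.ncard = 2
  face_deg : ∀ f, ∀ v ∈ C f, cnt (R f) {v} Finset.univ = 2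
  face_conn : ∀ f (X : Finset V), ∀ u ∈ X, ∀ w ∉ X, u ∈ C f → w ∈ C f →
    ∃ a ∈ X, ∃ b ∉ X, R f a b
  edge_conn : ∀ X : Finset V, X.Nonempty → Xᶜ.Nonempty → 3 ≤ cnt A X Xᶜ
  size : ∀ f, (C f).card = 5 ∨ (C f).card = 6
  pent : {f | (C f).card = 5}.ncard = 12

namespace CubicMap

variable {V F : Type} [Fintype V] [Fintype F] (M : CubicMap V F)

/-- The number of edges leaving `X`. -/
noncomputable def cut (X : Finset V) : ℕ := cnt M.A X Xᶜ

theorem three_le_cut {X : Finset V} (h : X.Nonempty) (h' : Xᶜ.Nonempty) : 3 ≤ M.cut X :=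
  M.edge_conn X h h'

theorem cut_compl (X : Finset V) : M.cut Xᶜ = M.cut X := by
  unfold cut
  rw [compl_compl, cnt_comm _ M.A_symm]

theorem cnt_A_univ (X : Finset V) : cnt M.A X univ = 3 * #X := by
  rw [cnt_eq_sum, sum_congr rfl (fun x _ => M.degree x)]
  simp [mul_comm]

theorem odd_of_cut {X : Finset V} (h : M.cut X = 3) : Odd #X := by
  have h1 := M.cnt_A_univ X
  rw [cnt_univ _ X] at h1
  obtain ⟨k, hk⟩ := cnt_self_even M.A M.A_symm M.A_irrefl X
  unfold cut at h
  rw [Nat.odd_iff]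
  omega

/-- Three faces meet at each vertex: each of the three edges at `v` lies on two faces, and each face
at `v` uses two of the edges. -/
theorem card_faces (v : V) : #{f | v ∈ M.C f} = 3 := by
  have h : ∑ f, #{w | M.R f v w} = ∑ w, #{f | M.R f v w} := by
    simpa [bipartiteAbove, bipartiteBelow] using
      sum_card_bipartiteAbove_eq_sum_card_bipartiteBelow (s := (univ : Finset F))
        (t := (univ : Finset V)) (fun f w => M.R f v w)
  have h1 : ∑ f, #{w | M.R f v w} = 2 * #{f | v ∈ M.C f} := by
    rw [card_filter, mul_sum]
    refine sum_congr rfl fun f _ => ?_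
    split_ifs with hf
    · simpa [cnt] using M.face_deg f v hf
    · rw [M.mem_C] at hf
      simpa using hf
  have h2 : ∑ w, #{f | M.R f v w} = 2 * #{w | M.A v w} := by
    rw [card_filter, mul_sum]
    refine sum_congr rfl fun w _ => ?_
    split_ifs with hw
    · have := M.two_faces v w hw
      rw [Set.ncard_eq_toFinset_card'] at this
      simpa using this
    · have : ∀ f, ¬ M.R f v w := fun f hf => hw (M.R_sub _ _ _ hf)
      simp [this]
  have h3 : #{w | M.A v w} = 3 := by simpa [cnt] using M.degree v
  omega

theorem card_two_faces {u v : V} (h : M.A u v) : #{f | M.R f u v} = 2 := by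
  have := M.two_faces u v h
  rw [Set.ncard_eq_toFinset_card'] at this
  simpa using this

theorem C_left {f u v} (h : M.R f u v) : u ∈ M.C f := (M.mem_C _ _).2 ⟨v, h⟩
theorem C_right {f u v} (h : M.R f u v) : v ∈ M.C f := M.C_left (M.R_symm _ _ _ h)

/-- The faces having an edge that leaves `X`. -/
noncomputable def crossing (X : Finset V) : Finset F := {f | ∃ u ∈ X, ∃ w ∉ X, M.R f u w}

theorem mem_crossing {X : Finset V} {f : F} : f ∈ M.crossing X ↔ ∃ u ∈ X, ∃ w ∉ X, M.R f u w := by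
  simp [crossing]

theorem crossing_compl (X : Finset V) : M.crossing Xᶜ = M.crossing X := by
  ext f
  simp only [mem_crossing, mem_compl, not_not]
  constructor <;> rintro ⟨u, hu, w, hw, h⟩ <;> exact ⟨w, hw, u, hu, M.R_symm _ _ _ h⟩

theorem subset_of_not_crossing {X : Finset V} {f : F} (hf : f ∉ M.crossing X) {u : V} (hu : u ∈ X)
    (huf : u ∈ M.C f) : M.C f ⊆ X := by
  intro w hw
  by_contra hwX
  exact hf (M.mem_crossing.2 (M.face_conn f X u hu w hwX huf hw))

/-- Every edge leaving `X` lies on two faces. -/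
theorem sum_cut (X : Finset V) : ∑ f, cnt (M.R f) X Xᶜ = 2 * M.cut X := by
  unfold cut cnt
  rw [sum_comm, mul_sum]
  refine sum_congr rfl fun x _ => ?_
  have h : ∑ f, #{w ∈ Xᶜ | M.R f x w} = ∑ w ∈ Xᶜ, #{f | M.R f x w} := by
    simpa [bipartiteAbove, bipartiteBelow] using
      sum_card_bipartiteAbove_eq_sum_card_bipartiteBelow (s := (univ : Finset F))
        (t := Xᶜ) (fun f w => M.R f x w)
  rw [h, card_filter, mul_sum]
  refine sum_congr rfl fun w _ => ?_
  split_ifs with hw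
  · rw [M.card_two_faces hw, mul_one]
  · have : ∀ f, ¬ M.R f x w := fun f hf => hw (M.R_sub _ _ _ hf)
    simp [this]

/-- A cycle crosses a cut an even number of times. -/
theorem cut_face_even (X : Finset V) (f : F) : Even (cnt (M.R f) X Xᶜ) := by
  have h1 : Even (cnt (M.R f) X univ) := by
    rw [cnt_eq_sum]
    refine even_sum _ fun x _ => ?_
    by_cases hx : x ∈ M.C f
    · rw [M.face_deg f x hx]; exact even_two
    · rw [M.mem_C] at hx
      push Not at hx
      simp [cnt, hx]
  rw [cnt_univ _ X] at h1
  have h2 := cnt_self_even (M.R f) (M.R_symm f) (fun u h => M.A_irrefl u (M.R_sub _ _ _ h)) X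
  exact (Nat.even_add.1 h1).1 h2

/-- Each crossing face uses exactly two of the three cut edges, being a cycle, and the cut edges have
six incidences with faces in total. -/
theorem card_crossing {X : Finset V} (h : M.cut X = 3) : #(M.crossing X) = 3 := by
  have h1 := M.sum_cut X
  have h2 : ∑ f, cnt (M.R f) X Xᶜ = 2 * #(M.crossing X) := by
    rw [crossing, card_filter, mul_sum]
    refine sum_congr rfl fun f _ => ?_
    obtain ⟨k, hk⟩ := M.cut_face_even X f
    split_ifs with hf
    · obtain ⟨u, hu, w, hw, h'⟩ := hf
      have hp := cnt_pos (M.R f) X Xᶜ hu (by simpa using hw) h'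
      have hle : cnt (M.R f) X Xᶜ ≤ M.cut X := by
        unfold cut cnt
        refine sum_le_sum fun x _ => card_le_card fun y hy => ?_
        simp only [mem_filter] at hy ⊢
        exact ⟨hy.1, M.R_sub _ _ _ hy.2⟩
      omega
    · by_contra hne
      obtain ⟨u, hu, w, hw, h'⟩ := exists_of_cnt_pos (M.R f) X Xᶜ (by omega)
      exact hf ⟨u, hu, w, by simpa using hw, h'⟩
  omega

/-- The number of incidences between vertices of `X` and faces crossing the cut around `X`. -/
noncomputable def crossInc (X : Finset V) : ℕ := ∑ f ∈ M.crossing X, #(M.C f ∩ X)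

theorem crossInc_add_compl (X : Finset V) : M.crossInc X + M.crossInc Xᶜ = ∑ f ∈ M.crossing X, #(M.C f) := by
  unfold crossInc
  rw [crossing_compl, ← sum_add_distrib]
  refine sum_congr rfl fun f _ => ?_
  rw [← sdiff_eq_inter_compl]
  exact card_inter_add_card_sdiff _ _

/-- The faces all of whose vertices belong to `X`. -/
noncomputable def inside (X : Finset V) : Finset F := {f | M.C f ⊆ X}

theorem C_nonempty (f : F) : (M.C f).Nonempty := by
  rw [← card_pos]; have := M.size f; omega

theorem not_crossing_of_inside {X : Finset V} {f : F} (h : f ∈ M.inside X) : f ∉ M.crossing X := by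
  intro hr
  obtain ⟨u, hu, w, hw, h'⟩ := M.mem_crossing.1 hr
  exact hw ((mem_filter.1 h).2 (M.C_right h'))

theorem sum_C_inter (X : Finset V) : ∑ f, #(M.C f ∩ X) = 3 * #X := by
  have h := sum_card_bipartiteAbove_eq_sum_card_bipartiteBelow (s := (univ : Finset F))
    (t := X) (fun f v => v ∈ M.C f)
  have h2 : ∀ f, M.C f ∩ X = {v ∈ X | v ∈ M.C f} := fun f => by ext; simp [and_comm]
  simp only [h2]
  unfold bipartiteAbove bipartiteBelow at h
  rw [h, sum_congr rfl (fun v _ => M.card_faces v)]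
  simp [mul_comm]

/-- Counting vertex-face incidences in `X`: each vertex lies on three faces, and a face meeting `X`
either crosses the cut or is contained in `X`. -/
theorem crossInc_add_inside (X : Finset V) : M.crossInc X + ∑ f ∈ M.inside X, #(M.C f) = 3 * #X := by
  rw [← M.sum_C_inter X, ← sum_add_sum_compl (M.crossing X), crossInc]
  congr 1
  have hsub : M.inside X ⊆ (M.crossing X)ᶜ := fun f hf => by simpa using M.not_crossing_of_inside hf
  rw [← sum_subset hsub]
  · refine sum_congr rfl fun f hf => ?_
    rw [inter_eq_left.2 (mem_filter.1 hf).2]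
  · intro f hf hn
    rw [card_eq_zero, eq_empty_iff_forall_notMem]
    intro v hv
    rw [mem_inter] at hv
    exact hn (by simpa [inside] using M.subset_of_not_crossing (by simpa using hf) hv.2 hv.1)

/-- The layer of `X` next to the cut: the vertices of `X` lying on a crossing face. -/
noncomputable def border (X : Finset V) : Finset V := {v ∈ X | ∃ f ∈ M.crossing X, v ∈ M.C f}

/-- The endpoints in `X` of the edges leaving `X`. -/
noncomputable def ends (X : Finset V) : Finset V := {v ∈ X | ∃ w ∉ X, M.A v w}

/-- Three cut edges have distinct ends in `X`: moving a common end out of `X` would leave an edge cut of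
size less than three. -/
theorem card_ends {X : Finset V} (h : M.cut X = 3) (h2 : 2 ≤ #X) : #(M.ends X) = 3 := by
  -- moving `x` across changes the cut by `3 - 2k`, where `k` is the number of cut edges at `x`
  have key : ∀ x ∈ X, cnt M.A {x} Xᶜ ≤ 1 := by
    intro x hx
    have hne : (X.erase x).Nonempty := by rw [← card_pos, card_erase_of_mem hx]; omega
    have h3 := M.three_le_cut hne ⟨x, by simp⟩
    have hd : Disjoint (X.erase x) {x} := by simp
    have hX : X.erase x ∪ {x} = X := by ext y; grind
    have hd' : Disjoint {x} Xᶜ := by simpa using hx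
    have hc : (X.erase x)ᶜ = {x} ∪ Xᶜ := by
      ext y; simp only [mem_compl, mem_union, mem_singleton, mem_erase]; tauto
    have e1 := M.degree x
    rw [cnt_univ _ X, ← hX, cnt_union _ _ hd, hX] at e1
    have e2 : cnt M.A {x} {x} = 0 := by simp [cnt, M.A_irrefl]
    unfold cut at h h3
    rw [hc, cnt_union _ _ hd', cnt_comm _ M.A_symm _ {x}] at h3
    rw [← hX, cnt_union_left _ M.A_symm _ hd, hX] at h
    omega
  have : M.cut X = #(M.ends X) := by
    unfold cut ends
    rw [card_filter, cnt_eq_sum]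
    refine sum_congr rfl fun x hx => ?_
    split_ifs with hz
    · obtain ⟨w, hw, hA⟩ := hz
      have := cnt_pos M.A {x} Xᶜ (mem_singleton_self x) (by simpa using hw) hA
      have := key x hx
      omega
    · by_contra hne
      obtain ⟨u, hu, w, hw, h'⟩ := exists_of_cnt_pos M.A {x} Xᶜ (by omega)
      rw [mem_singleton] at hu
      subst hu
      exact hz ⟨w, by simpa using hw, h'⟩
  omega

theorem two_le_crossing_of_ends {X : Finset V} {x : V} (hx : x ∈ M.ends X) :
    2 ≤ #{f ∈ M.crossing X | x ∈ M.C f} := by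
  obtain ⟨hxX, w, hw, hA⟩ := mem_filter.1 hx
  rw [← M.card_two_faces hA]
  refine card_le_card fun f hf => ?_
  have hf := (mem_filter.1 hf).2
  exact mem_filter.2 ⟨M.mem_crossing.2 ⟨x, hxX, w, hw, hf⟩, M.C_left hf⟩

theorem ends_subset_border (X : Finset V) : M.ends X ⊆ M.border X := by
  intro x hx
  have h2 := M.two_le_crossing_of_ends hx
  obtain ⟨f, hf⟩ := card_pos.1 (lt_of_lt_of_le two_pos h2)
  rw [mem_filter] at hf
  exact mem_filter.2 ⟨(mem_filter.1 hx).1, f, hf⟩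

/-- Each border vertex contributes to `crossInc`, and each of the three ends contributes at least twice,
through the two faces on its cut edge. -/
theorem border_add_three_le {X : Finset V} (h : M.cut X = 3) (h2 : 2 ≤ #X) :
    #(M.border X) + 3 ≤ M.crossInc X := by
  have e : M.crossInc X = ∑ v ∈ X, #{f ∈ M.crossing X | v ∈ M.C f} := by
    have h := sum_card_bipartiteAbove_eq_sum_card_bipartiteBelow (s := M.crossing X)
      (t := X) (fun f v => v ∈ M.C f)
    have h2 : ∀ f, M.C f ∩ X = {v ∈ X | v ∈ M.C f} := fun f => by ext; simp [and_comm]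
    unfold crossInc
    simp only [h2]
    exact h
  rw [e, ← M.card_ends h h2]
  unfold border
  rw [ends, card_filter, card_filter, ← sum_add_distrib]
  refine sum_le_sum fun v hv => ?_
  have hz : (∃ w ∉ X, M.A v w) → 2 ≤ #{f ∈ M.crossing X | v ∈ M.C f} := fun hz =>
    M.two_le_crossing_of_ends (mem_filter.2 ⟨hv, hz⟩)
  have hc : (∃ f ∈ M.crossing X, v ∈ M.C f) → 1 ≤ #{f ∈ M.crossing X | v ∈ M.C f} := by
    rintro ⟨f, hf⟩
    exact card_pos.2 ⟨f, mem_filter.2 hf⟩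
  split_ifs with h1 h2 h2
  · exact hz h2
  · exact hc h1
  · exact le_trans one_le_two (hz h2)
  · exact Nat.zero_le _

/-- Removing the border gives a smaller cut: a border vertex has two neighbours along a crossing face and
so at most one in the interior, while the three ends have none. -/
theorem cut_inner {X : Finset V} (h : M.cut X = 3) (h2 : 2 ≤ #X) :
    M.cut (X \ M.border X) + 3 ≤ #(M.border X) := by
  have hVX : M.border X ⊆ X := filter_subset _ _
  have hZ := M.ends_subset_border X
  have e0 : cnt M.A Xᶜ (X \ M.border X) = 0 := by
    by_contra hne
    obtain ⟨u, hu, w, hw, h'⟩ := exists_of_cnt_pos M.A _ _ (Nat.pos_of_ne_zero hne)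
    rw [mem_sdiff] at hw
    exact hw.2 (hZ (mem_filter.2 ⟨hw.1, u, by simpa using hu, M.A_symm _ _ h'⟩))
  have hc : (X \ M.border X)ᶜ = M.border X ∪ Xᶜ := by
    ext y; simp only [mem_compl, mem_union, mem_sdiff]; tauto
  have hd : Disjoint (M.border X) Xᶜ := by
    rw [Finset.disjoint_left]; intro y hy; simpa using hVX hy
  have hdZ : #(M.border X) = #(M.ends X) + #(M.border X \ M.ends X) := by
    rw [card_sdiff_of_subset hZ]; have := card_le_card hZ; omega
  have key : ∀ u ∈ M.border X, cnt M.A {u} (X \ M.border X) ≤ 1 := by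
    intro u hu
    obtain ⟨huX, f, hf, huf⟩ := mem_filter.1 hu
    have h3 := M.degree u
    have h2 := M.face_deg f u huf
    rw [cnt_univ _ (X \ M.border X)] at h3 h2
    have hz : cnt (M.R f) {u} (X \ M.border X) = 0 := by
      by_contra hne
      obtain ⟨v, hv, w, hw, h'⟩ := exists_of_cnt_pos _ _ _ (Nat.pos_of_ne_zero hne)
      rw [mem_sdiff] at hw
      exact hw.2 (mem_filter.2 ⟨hw.1, f, hf, M.C_right h'⟩)
    have hle : cnt (M.R f) {u} (X \ M.border X)ᶜ ≤ cnt M.A {u} (X \ M.border X)ᶜ := by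
      unfold cnt
      refine sum_le_sum fun x _ => card_le_card fun y hy => ?_
      simp only [mem_filter] at hy ⊢
      exact ⟨hy.1, M.R_sub _ _ _ hy.2⟩
    omega
  -- Two of the three faces at an end cross the cut, so one of the two faces on any edge at it does.
  have keyZ : ∀ u ∈ M.ends X, cnt M.A {u} (X \ M.border X) = 0 := by
    intro u hu
    by_contra hne
    obtain ⟨v, hv, w, hw, h'⟩ := exists_of_cnt_pos _ _ _ (Nat.pos_of_ne_zero hne)
    rw [mem_singleton] at hv
    subst hv
    rw [mem_sdiff] at hw
    have ht := M.two_le_crossing_of_ends hu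
    have ht' := M.card_two_faces h'
    have hdis : Disjoint ({f ∈ M.crossing X | v ∈ M.C f}) ({f | M.R f v w} : Finset F) := by
      rw [Finset.disjoint_left]
      intro f hf hf'
      rw [mem_filter] at hf hf'
      exact hw.2 (mem_filter.2 ⟨hw.1, f, hf.1, M.C_right hf'.2⟩)
    have hsub : ({f ∈ M.crossing X | v ∈ M.C f}) ∪ ({f | M.R f v w} : Finset F) ⊆
        ({f | v ∈ M.C f} : Finset F) := by
      intro f hf
      rw [mem_union, mem_filter, mem_filter] at hf
      rcases hf with hf | hf
      · exact mem_filter.2 ⟨mem_univ _, hf.2⟩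
      · exact mem_filter.2 ⟨mem_univ _, M.C_left hf.2⟩
    have := card_le_card hsub
    rw [card_union_of_disjoint hdis, M.card_faces] at this
    omega
  have hz3 := M.card_ends h h2
  unfold cut
  rw [cnt_comm _ M.A_symm, hc, cnt_union_left _ M.A_symm _ hd, e0, add_zero, cnt_eq_sum,
    ← sum_sdiff hZ, sum_eq_zero keyZ, add_zero]
  have := sum_le_sum (fun u (hu : u ∈ M.border X \ M.ends X) => key u (sdiff_subset hu))
  simp only [sum_const, smul_eq_mul, mul_one] at this
  omega

/-- All faces have size 5 or 6. -/
theorem sum_size_bounds (S : Finset F) : 5 * #S ≤ ∑ f ∈ S, #(M.C f) ∧ ∑ f ∈ S, #(M.C f) ≤ 6 * #S := by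
  have h1 := card_nsmul_le_sum S (fun f => #(M.C f)) 5 (fun f _ => by have := M.size f; omega)
  have h2 := sum_le_card_nsmul S (fun f => #(M.C f)) 6 (fun f _ => by have := M.size f; omega)
  simp only [smul_eq_mul] at h1 h2
  omega

/-- If something remains inside the border, the cut around it has at least three edges, so the border has
at least six vertices. Otherwise `X` is its own border; then `crossInc X < 9` forces `#X` to be 3 or
5, and the face sizes inside `X` would sum to 1, 2, 3 or 7, which no sum of fives and sixes equals. -/
theorem nine_le_crossInc {X : Finset V} (h : M.cut X = 3) (h2 : 2 ≤ #X) : 9 ≤ M.crossInc X := by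
  have h5 := M.border_add_three_le h h2
  by_cases he : (X \ M.border X).Nonempty
  · have h6 := M.cut_inner h h2
    have hz : 0 < #(M.ends X) := by rw [M.card_ends h h2]; norm_num
    obtain ⟨z, hz⟩ := card_pos.1 hz
    have := M.three_le_cut he ⟨z, by simp [M.ends_subset_border X hz]⟩
    omega
  · rw [not_nonempty_iff_eq_empty, sdiff_eq_empty_iff_subset] at he
    have hc := card_le_card he
    have hI := M.crossInc_add_inside X
    obtain ⟨l, u⟩ := M.sum_size_bounds (M.inside X)
    obtain ⟨k, hk⟩ := M.odd_of_cut h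
    omega

/-- The bound 9 holds on both sides of the cut, while the three crossing faces have at most 18 vertices in
all. So equality holds everywhere. -/
theorem crossInc_eq_nine {X : Finset V} (h : M.cut X = 3) (h2 : 2 ≤ #X) (h2' : 2 ≤ #Xᶜ) :
    M.crossInc X = 9 ∧ ∑ f ∈ M.crossing X, #(M.C f) = 18 ∧ ∀ f ∈ M.crossing X, #(M.C f) = 6 := by
  have h1 := M.nine_le_crossInc h h2
  have h1' := M.nine_le_crossInc ((M.cut_compl X).trans h) h2'
  have hs := M.crossInc_add_compl X
  have hr := M.card_crossing h
  have hu := (M.sum_size_bounds (M.crossing X)).2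
  refine ⟨by omega, by omega, fun f hf => ?_⟩
  have := add_sum_erase _ (fun f => #(M.C f)) hf
  have hu' := (M.sum_size_bounds ((M.crossing X).erase f)).2
  rw [card_erase_of_mem hf] at hu'
  have := M.size f
  omega

/-- Induction on `#X`, peeling off the border. The cut around what remains is again a 3-edge cut, and
it is nontrivial. The number of incidences leaves room, among the faces inside `X`, only for the
faces inside the smaller set and the hexagons crossing the smaller cut, so no pentagon is lost. -/
theorem pent_le_one (n : ℕ) : ∀ X : Finset V, #X ≤ n → M.cut X = 3 → 2 ≤ #X → 2 ≤ #Xᶜ →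
    #{f ∈ M.inside X | #(M.C f) = 5} ≤ 1 := by
  induction n with
  | zero => intro X h0 _ h2; omega
  | succ n ih =>
    intro X hn h h2 h2'
    obtain ⟨ha, -, -⟩ := M.crossInc_eq_nine h h2 h2'
    have h5 := M.border_add_three_le h h2
    have hI := M.crossInc_add_inside X
    by_cases he : (X \ M.border X).Nonempty
    · have h6 := M.cut_inner h h2
      have hz : 0 < #(M.ends X) := by rw [M.card_ends h h2]; norm_num
      obtain ⟨z, hz⟩ := card_pos.1 hz
      have h3 := M.three_le_cut he ⟨z, by simp [M.ends_subset_border X hz]⟩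
      have hVX : M.border X ⊆ X := filter_subset _ _
      have hcard : #(X \ M.border X) + 6 = #X := by
        rw [card_sdiff_of_subset hVX]; have := card_le_card hVX; omega
      have hcut : M.cut (X \ M.border X) = 3 := by omega
      have hcompl : 2 ≤ #(X \ M.border X)ᶜ :=
        h2'.trans (card_le_card (compl_subset_compl.2 sdiff_subset))
      -- a face reaching below the border cannot cross the outer cut
      have hring : M.crossing (X \ M.border X) ⊆ M.inside X := by
        intro f hf
        obtain ⟨u, hu, w, hw, hR⟩ := M.mem_crossing.1 hf
        rw [mem_sdiff] at hu
        have hfX : f ∉ M.crossing X := fun hfX =>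
          hu.2 (mem_filter.2 ⟨hu.1, f, hfX, M.C_left hR⟩)
        exact mem_filter.2 ⟨mem_univ _, M.subset_of_not_crossing hfX hu.1 (M.C_left hR)⟩
      have hins : M.inside (X \ M.border X) ⊆ M.inside X := by
        intro f hf
        exact mem_filter.2 ⟨mem_univ _, (mem_filter.1 hf).2.trans sdiff_subset⟩
      have hd : Disjoint (M.crossing (X \ M.border X)) (M.inside (X \ M.border X)) :=
        disjoint_right.2 fun f hf => M.not_crossing_of_inside hf
      have hsub := union_subset hring hins
      have hsum := sum_sdiff (f := fun f => #(M.C f)) hsub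
      rw [sum_union hd] at hsum
      have hr3 := M.card_crossing hcut
      have hl := (M.sum_size_bounds (M.crossing (X \ M.border X))).1
      have hne := card_pos.2 he
      -- If a single vertex remained, `#X = 7` leaves 12 incidences for the three faces around it,
      -- which need 15.
      have h2X : 2 ≤ #(X \ M.border X) := by
        by_contra hlt
        omega
      obtain ⟨ha', hs', hsix⟩ := M.crossInc_eq_nine hcut h2X hcompl
      have hI' := M.crossInc_add_inside (X \ M.border X)
      have hl' := (M.sum_size_bounds (M.inside X \ (M.crossing (X \ M.border X) ∪ M.inside (X \ M.border X)))).1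
      -- `#X` and the inner set differ by 6 vertices, hence 18 incidences, all used by the three
      -- hexagons crossing the inner cut
      have hempty : M.inside X \ (M.crossing (X \ M.border X) ∪ M.inside (X \ M.border X)) = ∅ := by
        rw [← card_eq_zero]; omega
      rw [sdiff_eq_empty_iff_subset] at hempty
      refine le_trans (card_le_card ?_) (ih (X \ M.border X) (by omega) hcut h2X hcompl)
      intro f hf
      rw [mem_filter] at hf ⊢
      refine ⟨?_, hf.2⟩
      rcases mem_union.1 (hempty hf.1) with hr | hi
      · have := hsix f hr
        omega
      · exact hi
    -- here `#X` is odd and at most 6, so at most 6 incidences are left for faces inside `X`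
    · rw [not_nonempty_iff_eq_empty, sdiff_eq_empty_iff_subset] at he
      have hc := card_le_card he
      have hl := (M.sum_size_bounds (M.inside X)).1
      obtain ⟨k, hk⟩ := M.odd_of_cut h
      have := card_filter_le (M.inside X) (fun f => #(M.C f) = 5)
      omega

theorem card_pent : #{f | #(M.C f) = 5} = 12 := by
  have := M.pent
  rw [Set.ncard_eq_toFinset_card'] at this
  simpa using this

/-- A nontrivial 3-edge cut would leave room for at most two of the twelve pentagons. -/
theorem no_cut (X : Finset V) (h : M.cut X = 3) (h2 : 2 ≤ #X) (h2' : 2 ≤ #Xᶜ) : False := by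
  have p := M.pent_le_one _ X le_rfl h h2 h2'
  have p' := M.pent_le_one _ Xᶜ le_rfl ((M.cut_compl X).trans h) h2' (by rwa [compl_compl])
  obtain ⟨-, -, hsix⟩ := M.crossInc_eq_nine h h2 h2'
  have hsub : ({f | #(M.C f) = 5} : Finset F) ⊆
      {f ∈ M.inside X | #(M.C f) = 5} ∪ {f ∈ M.inside Xᶜ | #(M.C f) = 5} := by
    intro f hf
    have hf5 := (mem_filter.1 hf).2
    have hr : f ∉ M.crossing X := fun hr => by have := hsix f hr; omega
    obtain ⟨v, hv⟩ := M.C_nonempty f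
    rw [mem_union, mem_filter, mem_filter]
    by_cases hvX : v ∈ X
    · exact Or.inl ⟨mem_filter.2 ⟨mem_univ _, M.subset_of_not_crossing hr hvX hv⟩, hf5⟩
    · exact Or.inr ⟨mem_filter.2 ⟨mem_univ _,
        M.subset_of_not_crossing (by rwa [crossing_compl]) (mem_compl.2 hvX) hv⟩, hf5⟩
  have := (card_le_card hsub).trans (card_union_le _ _)
  rw [M.card_pent] at this
  omega

theorem twenty_le (M : CubicMap V F) : 20 ≤ Fintype.card V := by
  have h := M.crossInc_add_inside univ
  have hsub : ({f | #(M.C f) = 5} : Finset F) ⊆ M.inside univ := fun f _ => by simp [inside]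
  have := card_le_card hsub
  rw [M.card_pent] at this
  have := (M.sum_size_bounds (M.inside univ)).1
  rw [card_univ] at h
  omega

end CubicMap

namespace CubicMap

variable {V F : Type} [Fintype V] [Fintype F] (M : CubicMap V F)

/-- A triangle would be one side of a nontrivial 3-edge cut. -/
theorem no_triangle {x y z : V} (h1 : M.A x y) (h2 : M.A x z) (h3 : M.A y z) : False := by
  have hxy : x ≠ y := fun h => M.A_irrefl _ (h ▸ h1)
  have hxz : x ≠ z := fun h => M.A_irrefl _ (h ▸ h2)
  have hyz : y ≠ z := fun h => M.A_irrefl _ (h ▸ h3)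
  have hc : #({x, y, z} : Finset V) = 3 := card_eq_three.2 ⟨x, y, z, hxy, hxz, hyz, rfl⟩
  have hin : cnt M.A {x, y, z} {x, y, z} = 6 := by
    simp [cnt, sum_insert, filter_insert, filter_singleton, hxy, hxz, hyz, M.A_irrefl, h1, h2, h3,
      M.A_symm _ _ h1, M.A_symm _ _ h2, M.A_symm _ _ h3]
  have hu := M.cnt_A_univ {x, y, z}
  rw [cnt_univ _ {x, y, z}, hin, hc] at hu
  have h20 := M.twenty_le
  refine M.no_cut {x, y, z} ?_ (by omega) (by rw [card_compl]; omega)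
  unfold cut
  omega

end CubicMap

/-! ### The incidence data of a fullerene -/

namespace Fullerene

variable {V : Type} [Fintype V] (Fu : Fullerene V)

noncomputable instance : Fintype Fu.faces.Face := @Fintype.ofFinite _ Fu.faces.faceFinite

theorem degree_eq (v : V) : cnt Fu.G.Adj {v} univ = 3 := by
  have h := Fu.cubic v
  rw [Nat.card_eq_fintype_card, Fintype.card_subtype] at h
  simpa [cnt] using h

/-- A cubic 3-connected graph is 3-edge-connected: at most two ends of cut edges separate the two sides,
unless they exhaust `X`, in which case `#X ≤ 2` and counting degrees gives at least three cut edges. -/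
theorem edge_connected (X : Finset V) (hX : X.Nonempty) (hY : Xᶜ.Nonempty) :
    3 ≤ cnt Fu.G.Adj X Xᶜ := by
  by_contra hlt
  set S : Finset V := {x ∈ X | ∃ y ∈ Xᶜ, Fu.G.Adj x y} with hS
  have hSX : S ⊆ X := filter_subset _ _
  have hScut : #S ≤ cnt Fu.G.Adj X Xᶜ := by
    rw [hS, card_filter, cnt]
    refine sum_le_sum fun x _ => ?_
    split_ifs with h
    · obtain ⟨y, hy, hA⟩ := h
      exact card_pos.2 ⟨y, mem_filter.2 ⟨hy, hA⟩⟩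
    · exact Nat.zero_le _
  by_cases hne : (X \ S).Nonempty
  · obtain ⟨u, hu⟩ := hne
    obtain ⟨w, hw⟩ := hY
    have hc := Fu.threeConnected (S : Set V) (by rw [Set.ncard_coe_finset]; omega)
    have hu' := mem_sdiff.1 hu
    have hwS : w ∉ S := fun h => (mem_compl.1 hw) (hSX h)
    obtain ⟨p⟩ := hc.preconnected ⟨u, by simpa using hu'.2⟩ ⟨w, by simpa using hwS⟩
    obtain ⟨d, -, hd1, hd2⟩ := p.exists_boundary_dart {z | z.1 ∈ X} hu'.1 (mem_compl.1 hw)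
    have hadj := d.adj
    simp only [Subgraph.coe_adj, Subgraph.deleteVerts_adj, Subgraph.top_adj] at hadj
    exact hadj.2.1 (mem_coe.2 (mem_filter.2 ⟨hd1, _, mem_compl.2 hd2, hadj.2.2.2.2⟩))
  · have hXS : X ⊆ S := by
      rwa [not_nonempty_iff_eq_empty, sdiff_eq_empty_iff_subset] at hne
    have hc := card_le_card hXS
    have htot : cnt Fu.G.Adj X univ = 3 * #X := by
      rw [cnt_eq_sum, sum_congr rfl (fun x _ => Fu.degree_eq x)]
      simp [mul_comm]
    rw [cnt_univ _ X] at htot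
    have hin : cnt Fu.G.Adj X X ≤ #X * (#X - 1) := by
      rw [cnt, ← smul_eq_mul]
      refine sum_le_card_nsmul _ _ _ fun x hx => ?_
      rw [← card_erase_of_mem hx]
      refine card_le_card fun y hy => ?_
      rw [mem_filter] at hy
      exact mem_erase.2 ⟨fun h => Fu.G.loopless.irrefl x (h ▸ hy.2), hy.1⟩
    have hp := card_pos.2 hX
    have : #X ≤ 2 := by omega
    interval_cases #X <;> omega

/-- A cycle has as many vertices as edges. -/
theorem card_face (f : Fu.faces.Face) :
    #{v | ∃ w, s(v, w) ∈ Fu.faces.boundary f} = (Fu.faces.boundary f).ncard := by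
  obtain ⟨x, p, hp, hb⟩ := Fu.faces.boundary_cycle f
  have h1 : Fu.faces.boundary f = (p.edges.toFinset : Set (Sym2 V)) := by
    ext e; simp [hb]
  have h2 : ({v | ∃ w, s(v, w) ∈ Fu.faces.boundary f} : Finset V) = p.support.tail.toFinset := by
    ext v
    rw [mem_filter, List.mem_toFinset]
    constructor
    · rintro ⟨-, w, hw⟩
      have := p.fst_mem_support_of_mem_edges ((hb _).1 hw)
      rw [Walk.mem_support_iff] at this
      rcases this with rfl | h
      · exact p.end_mem_tail_support hp.not_nil
      · exact h
    · intro hv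
      have h2 := hp.ncard_neighborSet_toSubgraph_eq_two (List.mem_of_mem_tail hv)
      obtain ⟨w, hw⟩ := Set.nonempty_of_ncard_ne_zero (h2 ▸ two_ne_zero)
      rw [Subgraph.mem_neighborSet, Walk.adj_toSubgraph_iff_mem_edges, ← hb] at hw
      exact ⟨mem_univ _, w, hw⟩
  rw [h2, h1, Set.ncard_coe_finset, List.toFinset_card_of_nodup hp.support_nodup,
    List.toFinset_card_of_nodup hp.edges_nodup]
  simp

/-- The incidence data of a fullerene. -/
noncomputable def toMap : CubicMap V Fu.faces.Face where
  A := Fu.G.Adj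
  R f u v := s(u, v) ∈ Fu.faces.boundary f
  A_symm _ _ h := h.symm
  A_irrefl u := Fu.G.loopless.irrefl u
  R_symm f u v h := by rwa [Sym2.eq_swap]
  R_sub f u v h := Fu.faces.boundary_sub f h
  C f := {v | ∃ w, s(v, w) ∈ Fu.faces.boundary f}
  mem_C f v := by simp
  degree := Fu.degree_eq
  two_faces u v h := Fu.faces.edge_faces s(u, v) h
  face_deg f v hv := by
    obtain ⟨x, p, hp, hb⟩ := Fu.faces.boundary_cycle f
    obtain ⟨w, hw⟩ := (mem_filter.1 hv).2
    have h2 := hp.ncard_neighborSet_toSubgraph_eq_two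
      (p.fst_mem_support_of_mem_edges ((hb _).1 hw))
    have : p.toSubgraph.neighborSet v = {w | s(v, w) ∈ Fu.faces.boundary f} := by
      ext w
      rw [Subgraph.mem_neighborSet, Walk.adj_toSubgraph_iff_mem_edges, ← hb]
      rfl
    rw [this, Set.ncard_eq_toFinset_card'] at h2
    simpa [cnt] using h2
  face_conn f X u hu w hw huf hwf := by
    obtain ⟨x, p, hp, hb⟩ := Fu.faces.boundary_cycle f
    obtain ⟨u', hu'⟩ := (mem_filter.1 huf).2
    obtain ⟨w', hw'⟩ := (mem_filter.1 hwf).2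
    have hup := p.fst_mem_support_of_mem_edges ((hb _).1 hu')
    have hwp := p.fst_mem_support_of_mem_edges ((hb _).1 hw')
    by_cases hx : x ∈ X
    · obtain ⟨d, hd, h1, h2⟩ := (p.takeUntil w hwp).exists_boundary_dart (X : Set V) hx hw
      exact ⟨d.fst, h1, d.snd, h2, (hb _).2 (p.edges_takeUntil_subset_edges hwp
        (List.mem_map_of_mem (f := Dart.edge) hd))⟩
    · obtain ⟨d, hd, h1, h2⟩ := (p.takeUntil u hup).exists_boundary_dart (X : Set V)ᶜ hx
        (by simpa using hu)
      refine ⟨d.snd, by simpa using h2, d.fst, h1, ?_⟩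
      rw [Sym2.eq_swap]
      exact (hb _).2 (p.edges_takeUntil_subset_edges hup (List.mem_map_of_mem (f := Dart.edge) hd))
  edge_conn := Fu.edge_connected
  size f := by rw [Fu.card_face]; exact Fu.face_size f
  pent := by simp only [Fu.card_face]; exact Fu.pentagons

end Fullerene

/-! ### Fragments with three vertices of degree 2 -/

/-- If a fragment `B` of a fullerene graph has exactly three vertices of degree 2, then
`T = F - (V(B) \ W)` is a star `K_{1,3}` whose three leaves are the vertices of `W`. -/
theorem fragment_three_deg2_K13 {V : Type} [Fintype V] (Fu : Fullerene V)
    (B : Fu.G.Subgraph) (hB : Fu.IsFragment B) (hW : (Fu.fragW B).ncard = 3) :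
    ∃ c a b d : V, a ≠ b ∧ a ≠ d ∧ b ≠ d ∧ c ∉ Fu.fragW B ∧
      Fu.fragW B = {a, b, d} ∧ Fu.fragTverts B = {c, a, b, d} ∧
      Fu.G.Adj c a ∧ Fu.G.Adj c b ∧ Fu.G.Adj c d ∧
      ¬ Fu.G.Adj a b ∧ ¬ Fu.G.Adj a d ∧ ¬ Fu.G.Adj b d := by
  obtain ⟨S, hE, hV, -⟩ := hB
  set M := Fu.toMap with hM
  set Y : Finset V := {v | v ∈ B.verts} with hYdef
  have memY : ∀ v, v ∈ Y ↔ v ∈ B.verts := fun v => by simp [Y]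
  have hdegW : ∀ v, v ∈ Fu.fragW B ↔ v ∈ B.verts ∧ cnt B.Adj {v} univ = 2 := by
    intro v
    have : Nat.card {w // B.Adj v w} = cnt B.Adj {v} univ := by
      rw [Nat.card_eq_fintype_card, Fintype.card_subtype]
      simp [cnt]
    rw [← this]; rfl
  -- the edges of the fullerene outside the fragment
  obtain ⟨r, hrA⟩ : ∃ r : V → V → Prop, ∀ u v, r u v ↔ Fu.G.Adj u v ∧ ¬ B.Adj u v :=
    ⟨_, fun _ _ => Iff.rfl⟩
  have hsplit : ∀ v, cnt B.Adj {v} univ + cnt r {v} univ = 3 := by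
    intro v
    rw [← Fu.degree_eq v]
    simp only [cnt, sum_singleton]
    rw [← card_filter_add_card_filter_not (s := ({w | Fu.G.Adj v w} : Finset V)) (B.Adj v),
      filter_filter, filter_filter]
    congr 2 <;> ext w <;> simp only [mem_filter, mem_univ, true_and, hrA]
    exact ⟨fun h => ⟨B.adj_sub h, h⟩, fun h => h.2⟩
  -- Each vertex of `B` lies on a face contained in `B`, so it has degree at least 2 in `B`.
  have hface : ∀ v ∈ B.verts, ∃ f, v ∈ M.C f ∧ ∀ w, M.R f v w → B.Adj v w := by
    intro v hv
    rw [hV] at hv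
    obtain ⟨e, he, hve⟩ := hv
    rw [hE] at he
    simp only [Set.mem_iUnion] at he
    obtain ⟨f, hfS, hef⟩ := he
    obtain ⟨w, rfl⟩ := hve
    refine ⟨f, (M.mem_C f v).2 ⟨w, hef⟩, fun z hz => ?_⟩
    rw [← Subgraph.mem_edgeSet, hE]
    exact Set.mem_biUnion hfS hz
  have hdeg2 : ∀ v ∈ B.verts, 2 ≤ cnt B.Adj {v} univ := by
    intro v hv
    obtain ⟨f, hf, hsub⟩ := hface v hv
    rw [← M.face_deg f v hf]
    simp only [cnt, sum_singleton]
    refine card_le_card fun w hw => ?_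
    rw [mem_filter] at hw ⊢
    exact ⟨mem_univ _, hsub w hw.2⟩
  -- each vertex of `W` has exactly one edge outside `B`, and the other vertices of `B` have none
  have hr : cnt r Y univ = 3 := by
    have hWY : ({v ∈ Y | v ∈ Fu.fragW B} : Finset V) = (Fu.fragW B).toFinset := by
      ext v
      simp only [mem_filter, Set.mem_toFinset, memY]
      exact ⟨fun h => h.2, fun h => ⟨h.1, h⟩⟩
    rw [← hW, Set.ncard_eq_toFinset_card', ← hWY, card_filter, cnt_eq_sum]
    refine sum_congr rfl fun v hv => ?_
    have h1 := hsplit v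
    have h2 := hdeg2 v ((memY v).1 hv)
    have h3 := hdegW v
    split_ifs with h
    · have := (h3.1 h).2
      omega
    · have : cnt B.Adj {v} univ ≠ 2 := fun h' => h (h3.2 ⟨(memY v).1 hv, h'⟩)
      omega
  have hcut : cnt r Y Yᶜ = M.cut Y := by
    unfold CubicMap.cut cnt
    refine sum_congr rfl fun v hv => congrArg _ (filter_congr fun w hw => ?_)
    rw [hrA]
    refine ⟨fun h => h.1, fun h => ⟨h, fun hBa => ?_⟩⟩
    exact (mem_compl.1 hw) ((memY w).2 (B.edge_vert hBa.symm))
  -- Of these three edge ends, an even number belongs to edges joining two vertices of `W`, so an odd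
  -- number leaves `V(B)`; by 3-edge-connectivity all three do.
  obtain ⟨k, hk⟩ := cnt_self_even r
    (fun u v h => (hrA v u).2 ⟨((hrA u v).1 h).1.symm, fun h' => ((hrA u v).1 h).2 h'.symm⟩)
    (fun u h => Fu.G.loopless.irrefl u ((hrA u u).1 h).1) Y
  rw [cnt_univ r Y] at hr
  have hYc : Yᶜ.Nonempty := by
    obtain ⟨_, _, w, hw, _⟩ := exists_of_cnt_pos r Y Yᶜ (by omega)
    exact ⟨w, hw⟩
  have hYne : Y.Nonempty := by
    obtain ⟨v, hv, _⟩ := exists_of_cnt_pos r Y Yᶜ (by omega)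
    exact ⟨v, hv⟩
  have h3 := M.three_le_cut hYne hYc
  have hcut3 : M.cut Y = 3 := by omega
  have hY2 : 2 ≤ #Y := by
    obtain ⟨v, hv⟩ := hYne
    have h2 := hdeg2 v ((memY v).1 hv)
    obtain ⟨w, hw⟩ : ∃ w, B.Adj v w := by
      simpa using exists_of_cnt_pos B.Adj {v} univ (by omega)
    exact one_lt_card.2 ⟨v, hv, w, (memY w).2 (B.edge_vert hw.symm), hw.ne⟩
  -- a 3-edge cut with at least two vertices in `V(B)` must have a single vertex on the other side
  have hc1 : #Yᶜ = 1 := by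
    have := card_pos.2 hYc
    by_contra hne
    exact M.no_cut Y hcut3 hY2 (by omega)
  obtain ⟨c, hc⟩ := card_eq_one.1 hc1
  have memc : ∀ v, v ∉ B.verts ↔ v = c := by
    intro v
    rw [← memY, ← mem_compl, hc, mem_singleton]
  have hcB : c ∉ B.verts := (memc c).2 rfl
  -- every neighbour of `c` loses the edge to `c` in `B`, hence lies in `W`
  have hNsub : ({w | Fu.G.Adj c w} : Finset V) ⊆ (Fu.fragW B).toFinset := by
    intro w hw
    have hw := (mem_filter.1 hw).2
    have hwB : w ∈ B.verts := by
      by_contra h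
      exact hw.ne ((memc w).1 h).symm
    rw [Set.mem_toFinset, hdegW]
    refine ⟨hwB, ?_⟩
    have h1 := hsplit w
    have h2 := hdeg2 w hwB
    have := cnt_pos r {w} univ (mem_singleton_self w) (mem_univ c)
      ((hrA w c).2 ⟨hw.symm, fun h => hcB (B.edge_vert h.symm)⟩)
    omega
  have hN : ({w | Fu.G.Adj c w} : Finset V) = (Fu.fragW B).toFinset := by
    refine eq_of_subset_of_card_le hNsub ?_
    rw [← Set.ncard_eq_toFinset_card', hW]
    have := Fu.degree_eq c
    simp only [cnt, sum_singleton] at this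
    exact this.ge
  obtain ⟨a, b, d, hab, had, hbd, hWeq⟩ := Set.ncard_eq_three.1 hW
  have hadj : ∀ v, v ∈ Fu.fragW B → Fu.G.Adj c v := by
    intro v hv
    rw [← Set.mem_toFinset, ← hN] at hv
    exact (mem_filter.1 hv).2
  have ha := hadj a (by simp [hWeq])
  have hb := hadj b (by simp [hWeq])
  have hd := hadj d (by simp [hWeq])
  refine ⟨c, a, b, d, hab, had, hbd, fun h => hcB h.1, hWeq, ?_, ha, hb, hd,
    M.no_triangle ha hb, M.no_triangle ha hd, M.no_triangle hb hd⟩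
  rw [Set.insert_eq, ← hWeq]
  ext v
  simp only [Fullerene.fragTverts, Set.mem_ofPred_eq, Set.mem_sdiff, Set.mem_union,
    Set.mem_singleton_iff, ← memc v]
  tauto
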